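/- Key identity of Appendix B (z-independence of Γ_{ij}): Let τ lie in the complex upper half-plane and let u, x, y ∈ ℂ be such that all theta-function values appearing in denominators below are nonzero. Then S''(u+x,τ)·S'(x,τ)·[−ζ₁(u+y, τ/2) + ζ₁(y−x, τ/2) + 2ζ₂(u+x, τ)] − S''(x,τ)·S'(u+x,τ)·[−ζ₁(y, τ/2) + ζ₁(y−x, τ/2) + 2ζ₂(x, τ)] + 2 S'(u+x,τ)·S'(x,τ)·[℘₂(x,τ) − ℘₂(u+x,τ)] = S''(x−y,τ)·[S'(y,τ) S'(u+x,τ) − S'(x,τ) S'(u+y,τ)]. (With x = ξ_i, y = ξ_j, this identity shows that the ratio ∂_{λ_j}Q(u(z),ξ_i,τ) / (Q(u(z),ξ_j,τ) − Q(u(z),ξ_i,τ)), where Q(u,ξ,τ) = S'(u+ξ,τ)/S'(ξ,τ), is independent of z and equals Γ_{ij} = −(1/(4πi))(S'(ξ_j)/S'(ξ_i)) S''(ξ_i−ξ_j) ∂τ/∂λ_j along solutions of the elliptic Löwner and Gibbons–Tsarev systems.) -/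

import Mathlib

open Complex

/-- Jacobi theta function θ₁(u,τ). -/
noncomputable def theta1 (u τ : ℂ) : ℂ :=
  -∑' k : ℤ, Complex.exp ((Real.pi : ℂ) * Complex.I * τ * ((k : ℂ) + 1/2)^2
      + 2 * (Real.pi : ℂ) * Complex.I * (u + 1/2) * ((k : ℂ) + 1/2))

/-- Jacobi theta function θ₂(u,τ). -/
noncomputable def theta2 (u τ : ℂ) : ℂ :=
  ∑' k : ℤ, Complex.exp ((Real.pi : ℂ) * Complex.I * τ * ((k : ℂ) + 1/2)^2
      + 2 * (Real.pi : ℂ) * Complex.I * u * ((k : ℂ) + 1/2))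

/-- Jacobi theta function θ₃(u,τ). -/
noncomputable def theta3 (u τ : ℂ) : ℂ :=
  ∑' k : ℤ, Complex.exp ((Real.pi : ℂ) * Complex.I * τ * (k : ℂ)^2
      + 2 * (Real.pi : ℂ) * Complex.I * u * (k : ℂ))

/-- Jacobi theta function θ₄(u,τ). -/
noncomputable def theta4 (u τ : ℂ) : ℂ :=
  ∑' k : ℤ, Complex.exp ((Real.pi : ℂ) * Complex.I * τ * (k : ℂ)^2
      + 2 * (Real.pi : ℂ) * Complex.I * (u + 1/2) * (k : ℂ))

/-- ζ_a(u,τ) = θ_a'(u,τ)/θ_a(u,τ). -/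
noncomputable def zeta1 (u τ : ℂ) : ℂ := deriv (fun v => theta1 v τ) u / theta1 u τ
noncomputable def zeta2 (u τ : ℂ) : ℂ := deriv (fun v => theta2 v τ) u / theta2 u τ
noncomputable def zeta3 (u τ : ℂ) : ℂ := deriv (fun v => theta3 v τ) u / theta3 u τ
noncomputable def zeta4 (u τ : ℂ) : ℂ := deriv (fun v => theta4 v τ) u / theta4 u τ

/-- ℘_a(u,τ) = −∂_u ζ_a(u,τ). -/
noncomputable def wp1 (u τ : ℂ) : ℂ := -deriv (fun v => zeta1 v τ) u
noncomputable def wp2 (u τ : ℂ) : ℂ := -deriv (fun v => zeta2 v τ) u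
noncomputable def wp1' (u τ : ℂ) : ℂ := deriv (fun v => wp1 v τ) u
noncomputable def wp2' (u τ : ℂ) : ℂ := deriv (fun v => wp2 v τ) u

/-- S'(u,τ) = ζ₁(u,τ) − ζ₄(u,τ). -/
noncomputable def Sp (u τ : ℂ) : ℂ := zeta1 u τ - zeta4 u τ
/-- S''(u,τ) = ∂_u S'(u,τ). -/
noncomputable def Spp (u τ : ℂ) : ℂ := deriv (fun v => Sp v τ) u
/-- S'''(u,τ) = ∂_u S''(u,τ). -/
noncomputable def Sppp (u τ : ℂ) : ℂ := deriv (fun v => Spp v τ) u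

/-- Partial derivative in the j-th coordinate of a ℂ-valued function on ℝ^N. -/
noncomputable def pdC {N : ℕ} (j : Fin N) (f : (Fin N → ℝ) → ℂ) (x : Fin N → ℝ) : ℂ :=
  fderiv ℝ f x (Pi.single j 1)

/-- Partial derivative in the j-th coordinate of an ℝ-valued function on ℝ^d. -/
noncomputable def pd {d : ℕ} (j : Fin d) (f : (Fin d → ℝ) → ℝ) (x : Fin d → ℝ) : ℝ :=
  fderiv ℝ f x (Pi.single j 1)

/-- Abstract core of the identity, in terms of entire functions. -/
theorem core_identity (T1 T2 T3 T4 V1 V2 : ℂ → ℂ)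
    (d1 : Differentiable ℂ T1) (d4 : Differentiable ℂ T4) (dv : Differentiable ℂ V1)
    (e2 : ∀ z, T1 (z + 1/2) = T2 z) (e3 : ∀ z, T4 (z + 1/2) = T3 z)
    (ev0 : ∀ z, V1 (z + 1/2) = V2 z)
    (ev : ∀ z, V2 (z + 1/2) = -V1 z)
    (hA : ∀ x d, V1 x * V2 d = T1 (x + d) * T4 (x - d) + T4 (x + d) * T1 (x - d))
    (hB : ∀ x d, V2 x * V1 d = T1 (x + d) * T4 (x - d) - T4 (x + d) * T1 (x - d))
    (f Z z2 : ℂ → ℂ)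
    (hf : ∀ z, f z = deriv T1 z / T1 z - deriv T4 z / T4 z)
    (hZ : ∀ z, Z z = deriv V1 z / V1 z)
    (hz2 : ∀ z, z2 z = deriv T2 z / T2 z)
    (x d : ℂ) (hx1 : T1 x ≠ 0) (hx4 : T4 x ≠ 0) (hx2 : T2 x ≠ 0)
    (hd1 : T1 d ≠ 0) (hd4 : T4 d ≠ 0)
    (ht1 : T1 (x - d) ≠ 0) (ht4 : T4 (x - d) ≠ 0) :
    deriv f x * (-Z (x - d) - Z d + 2 * z2 x) + 2 * f x * deriv z2 x
      + deriv f d * f (x - d) = f x * deriv Z d := by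
  have dd1 : Differentiable ℂ (deriv T1) := fun z =>
    ((d1.analyticAt z).deriv).differentiableAt
  have dd4 : Differentiable ℂ (deriv T4) := fun z =>
    ((d4.analyticAt z).deriv).differentiableAt
  have ddv : Differentiable ℂ (deriv V1) := fun z =>
    ((dv.analyticAt z).deriv).differentiableAt
  have T2eq : T2 = fun z => T1 (z + 1/2) := by funext z; rw [e2]
  have T3eq : T3 = fun z => T4 (z + 1/2) := by funext z; rw [e3]
  have feq : f = fun z => deriv T1 z / T1 z - deriv T4 z / T4 z := funext hf
  have Zeq : Z = fun z => deriv V1 z / V1 z := funext hZ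
  have z2eq : z2 = fun z => deriv T2 z / T2 z := funext hz2
  have d2 : Differentiable ℂ T2 := by rw [T2eq]; fun_prop
  have d3 : Differentiable ℂ T3 := by rw [T3eq]; fun_prop
  have dd2 : Differentiable ℂ (deriv T2) := fun z =>
    ((d2.analyticAt z).deriv).differentiableAt
  -- the constants
  have hc : ∀ z, V1 z * V2 0 = 2 * (T1 z * T4 z) := by
    intro z; have := hA z 0; simp only [add_zero, sub_zero] at this; rw [this]; ring
  have hc0 : V2 0 ≠ 0 := by
    intro h; have := hc x; rw [h, mul_zero] at this
    exact mul_ne_zero two_ne_zero (mul_ne_zero hx1 hx4) this.symm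
  have hV : ∀ z, T1 z ≠ 0 → T4 z ≠ 0 → V1 z ≠ 0 := by
    intro z a b h; have := hc z; rw [h, zero_mul] at this
    exact mul_ne_zero two_ne_zero (mul_ne_zero a b) this.symm
  set c := V2 0 with hcdef
  set a := deriv V1 0 with hadef
  have hW : ∀ z, V2 z * a = 2 * (deriv T1 z * T4 z - T1 z * deriv T4 z) := by
    intro z
    have l : HasDerivAt (fun e => V2 z * V1 e) (V2 z * a) 0 :=
      (dv 0).hasDerivAt.const_mul _
    have h1 : HasDerivAt (fun e => T1 (z + e)) (deriv T1 z) 0 := by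
      have := (d1 (z + 0)).hasDerivAt.comp_const_add z 0; simpa using this
    have h4 : HasDerivAt (fun e => T4 (z + e)) (deriv T4 z) 0 := by
      have := (d4 (z + 0)).hasDerivAt.comp_const_add z 0; simpa using this
    have h1' : HasDerivAt (fun e => T1 (z - e)) (-deriv T1 z) 0 := by
      have := (d1 (z - 0)).hasDerivAt.comp_const_sub z 0; simpa using this
    have h4' : HasDerivAt (fun e => T4 (z - e)) (-deriv T4 z) 0 := by
      have := (d4 (z - 0)).hasDerivAt.comp_const_sub z 0; simpa using this
    have r := (h1.mul h4').sub (h4.mul h1')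
    have := l.unique (r.congr_of_eventuallyEq (Filter.Eventually.of_forall (fun e => hB z e)))
    rw [this]; simp; ring
  have hfV : ∀ z, T1 z ≠ 0 → T4 z ≠ 0 → f z * V1 z * c = a * V2 z := by
    intro z p q
    have h1 := hW z
    rw [mul_assoc, hc z, mul_comm a, h1, hf]; field_simp
  -- neighbourhoods
  have ev1 : ∀ z, T1 z ≠ 0 → ∀ᶠ w in nhds z, T1 w ≠ 0 := fun z h =>
    (d1 z).continuousAt.eventually_ne h
  have ev4 : ∀ z, T4 z ≠ 0 → ∀ᶠ w in nhds z, T4 w ≠ 0 := fun z h =>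
    (d4 z).continuousAt.eventually_ne h
  have df : ∀ z, T1 z ≠ 0 → T4 z ≠ 0 → AnalyticAt ℂ f z := by
    intro z p q; rw [feq]
    exact ((d1.analyticAt z).deriv.div (d1.analyticAt z) p).sub
      ((d4.analyticAt z).deriv.div (d4.analyticAt z) q)
  have dZ : ∀ z, T1 z ≠ 0 → T4 z ≠ 0 → DifferentiableAt ℂ Z z := by
    intro z p q; rw [Zeq]
    exact (ddv z).div (dv z) (hV z p q)
  have hZ14 : ∀ z, T1 z ≠ 0 → T4 z ≠ 0 → Z z = deriv T1 z / T1 z + deriv T4 z / T4 z := by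
    intro z p q
    have l : HasDerivAt (fun e => V1 e * c) (deriv V1 z * c) z := (dv z).hasDerivAt.mul_const _
    have r := ((d1 z).hasDerivAt.mul (d4 z).hasDerivAt).const_mul 2
    have := l.unique (r.congr_of_eventuallyEq (Filter.Eventually.of_forall (fun e => hc e)))
    have hv := hV z p q
    have h3 : Z z * (V1 z * c) = deriv V1 z * c := by rw [hZ]; field_simp
    rw [hc z, this] at h3
    have : T1 z * T4 z ≠ 0 := mul_ne_zero p q
    field_simp
    linear_combination h3 / 2
  -- master identities
  have M4 : ∀ x d, T1 x ≠ 0 → T4 x ≠ 0 → T1 d ≠ 0 → T4 d ≠ 0 →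
      2 * a * T1 (x + d) * T4 (x - d) = c * (V1 x * V1 d * (f d + f x)) := by
    intro x d p q r s
    linear_combination (-a) * hA x d - a * hB x d - V1 x * hfV d r s - V1 d * hfV x p q
  have M1 : ∀ x d, T1 x ≠ 0 → T4 x ≠ 0 → T1 d ≠ 0 → T4 d ≠ 0 →
      2 * a * T4 (x + d) * T1 (x - d) = c * (V1 x * V1 d * (f d - f x)) := by
    intro x d p q r s
    linear_combination (-a) * hA x d + a * hB x d - V1 x * hfV d r s + V1 d * hfV x p q
  have cadd : ∀ z : ℂ, Filter.Tendsto (fun e : ℂ => z + e) (nhds 0) (nhds z) := by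
    intro z
    have : Continuous (fun e : ℂ => z + e) := by fun_prop
    simpa using this.tendsto 0
  have csub : ∀ z : ℂ, Filter.Tendsto (fun e : ℂ => z - e) (nhds 0) (nhds z) := by
    intro z
    have : Continuous (fun e : ℂ => z - e) := by fun_prop
    simpa using this.tendsto 0
  have Dadd : ∀ (g : ℂ → ℂ) (z : ℂ), DifferentiableAt ℂ g z →
      HasDerivAt (fun e => g (z + e)) (deriv g z) 0 := by
    intro g z h
    have := HasDerivAt.comp_const_add (f := g) (f' := deriv g z) z 0 (by simpa using h.hasDerivAt)
    exact this
  have Dsub : ∀ (g : ℂ → ℂ) (z : ℂ), DifferentiableAt ℂ g z →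
      HasDerivAt (fun e => g (z - e)) (-deriv g z) 0 := by
    intro g z h
    have := HasDerivAt.comp_const_sub (f := g) (f' := deriv g z) z 0 (by simpa using h.hasDerivAt)
    exact this
  have D2 : ∀ (g : ℂ → ℂ) (z : ℂ), DifferentiableAt ℂ g z →
      HasDerivAt (fun e => g (z + 2 * e)) (deriv g z * 2) 0 := by
    intro g z h
    have h1 : HasDerivAt (fun e : ℂ => z + 2 * e) 2 0 := by
      simpa using ((hasDerivAt_id (0:ℂ)).const_mul 2).const_add z
    exact HasDerivAt.comp (h₂ := g) 0 (by simpa using h.hasDerivAt) h1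
  have E4 : ∀ x d, T1 x ≠ 0 → T4 x ≠ 0 → T1 d ≠ 0 → T4 d ≠ 0 → T4 (x - d) ≠ 0 →
      2 * (deriv T4 (x - d) / T4 (x - d)) * (f d + f x)
        = (Z x - Z d) * (f d + f x) + deriv f x - deriv f d := by
    intro x d p q r s t
    have l := (D2 T4 (x - d) (d4 _)).const_mul (2 * a * T1 (x + d))
    have r1 := ((((Dadd V1 x (dv x)).mul (Dsub V1 d (dv d))).mul
      ((Dsub f d (df d r s).differentiableAt).add
        (Dadd f x (df x p q).differentiableAt))).const_mul c)
    have heq : (fun e => 2 * a * T1 (x + d) * T4 (x - d + 2 * e)) =ᶠ[nhds 0]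
        (fun e => c * (V1 (x + e) * V1 (d - e) * (f (d - e) + f (x + e)))) := by
      filter_upwards [cadd x (ev1 x p), cadd x (ev4 x q), csub d (ev1 d r), csub d (ev4 d s)]
        with e h1 h2 h3 h4
      have := M4 (x + e) (d - e) h1 h2 h3 h4
      rw [show x + e + (d - e) = x + d by ring,
        show x + e - (d - e) = x - d + 2 * e by ring] at this
      exact this
    have h := l.unique (r1.congr_of_eventuallyEq heq)
    have m := M4 x d p q r s
    have hv := hV x p q
    have hv' := hV d r s
    simp at h
    have k : c * V1 x * V1 d ≠ 0 := mul_ne_zero (mul_ne_zero hc0 hv) hv'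
    apply mul_left_cancel₀ k
    have zx : deriv V1 x = Z x * V1 x := by rw [hZ]; field_simp
    have zd : deriv V1 d = Z d * V1 d := by rw [hZ]; field_simp
    have t4 : deriv T4 (x - d) = (deriv T4 (x - d) / T4 (x - d)) * T4 (x - d) := by field_simp
    rw [zx, zd, t4] at h
    linear_combination h - 2 * (deriv T4 (x - d) / T4 (x - d)) * m
  have E1 : ∀ x d, T1 x ≠ 0 → T4 x ≠ 0 → T1 d ≠ 0 → T4 d ≠ 0 → T1 (x - d) ≠ 0 →
      2 * (deriv T1 (x - d) / T1 (x - d)) * (f d - f x)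
        = (Z x - Z d) * (f d - f x) - deriv f x - deriv f d := by
    intro x d p q r s t
    have l := (D2 T1 (x - d) (d1 _)).const_mul (2 * a * T4 (x + d))
    have r1 := ((((Dadd V1 x (dv x)).mul (Dsub V1 d (dv d))).mul
      ((Dsub f d (df d r s).differentiableAt).sub
        (Dadd f x (df x p q).differentiableAt))).const_mul c)
    have heq : (fun e => 2 * a * T4 (x + d) * T1 (x - d + 2 * e)) =ᶠ[nhds 0]
        (fun e => c * (V1 (x + e) * V1 (d - e) * (f (d - e) - f (x + e)))) := by
      filter_upwards [cadd x (ev1 x p), cadd x (ev4 x q), csub d (ev1 d r), csub d (ev4 d s)]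
        with e h1 h2 h3 h4
      have := M1 (x + e) (d - e) h1 h2 h3 h4
      rw [show x + e + (d - e) = x + d by ring,
        show x + e - (d - e) = x - d + 2 * e by ring] at this
      exact this
    have h := l.unique (r1.congr_of_eventuallyEq heq)
    have m := M1 x d p q r s
    have hv := hV x p q
    have hv' := hV d r s
    simp at h
    have k : c * V1 x * V1 d ≠ 0 := mul_ne_zero (mul_ne_zero hc0 hv) hv'
    apply mul_left_cancel₀ k
    have zx : deriv V1 x = Z x * V1 x := by rw [hZ]; field_simp
    have zd : deriv V1 d = Z d * V1 d := by rw [hZ]; field_simp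
    have t4 : deriv T1 (x - d) = (deriv T1 (x - d) / T1 (x - d)) * T1 (x - d) := by field_simp
    rw [zx, zd, t4] at h
    linear_combination h - 2 * (deriv T1 (x - d) / T1 (x - d)) * m
  -- second derivatives
  have fx := df x hx1 hx4
  have fd := df d hd1 hd4
  have dfx := Dadd f x fx.differentiableAt
  have dfd := Dadd f d fd.differentiableAt
  have ddfx := Dadd (deriv f) x fx.deriv.differentiableAt
  have ddfd := Dadd (deriv f) d fd.deriv.differentiableAt
  have dZx := Dadd Z x (dZ x hx1 hx4)
  have dZd := Dadd Z d (dZ d hd1 hd4)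
  have F4 : 2 * (deriv T4 (x - d) / T4 (x - d)) * (deriv f d + deriv f x)
      = (deriv Z x - deriv Z d) * (f d + f x) + (Z x - Z d) * (deriv f d + deriv f x)
        + deriv (deriv f) x - deriv (deriv f) d := by
    have l := (dfd.add dfx).const_mul (2 * (deriv T4 (x - d) / T4 (x - d)))
    have r := (((dZx.sub dZd).mul (dfd.add dfx)).add ddfx).sub ddfd
    have heq : (fun e => 2 * (deriv T4 (x - d) / T4 (x - d)) * (f (d + e) + f (x + e)))
        =ᶠ[nhds 0] (fun e => (Z (x + e) - Z (d + e)) * (f (d + e) + f (x + e))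
          + deriv f (x + e) - deriv f (d + e)) := by
      filter_upwards [cadd x (ev1 x hx1), cadd x (ev4 x hx4), cadd d (ev1 d hd1),
        cadd d (ev4 d hd4)] with e h1 h2 h3 h4
      have := E4 (x + e) (d + e) h1 h2 h3 h4
      rw [show x + e - (d + e) = x - d by ring] at this
      exact this ht4
    have h := l.unique (r.congr_of_eventuallyEq heq)
    simp only [Pi.sub_apply, Pi.add_apply, add_zero] at h
    linear_combination h
  have F1 : 2 * (deriv T1 (x - d) / T1 (x - d)) * (deriv f d - deriv f x)
      = (deriv Z x - deriv Z d) * (f d - f x) + (Z x - Z d) * (deriv f d - deriv f x)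
        - deriv (deriv f) x - deriv (deriv f) d := by
    have l := (dfd.sub dfx).const_mul (2 * (deriv T1 (x - d) / T1 (x - d)))
    have r := (((dZx.sub dZd).mul (dfd.sub dfx)).sub ddfx).sub ddfd
    have heq : (fun e => 2 * (deriv T1 (x - d) / T1 (x - d)) * (f (d + e) - f (x + e)))
        =ᶠ[nhds 0] (fun e => (Z (x + e) - Z (d + e)) * (f (d + e) - f (x + e))
          - deriv f (x + e) - deriv f (d + e)) := by
      filter_upwards [cadd x (ev1 x hx1), cadd x (ev4 x hx4), cadd d (ev1 d hd1),
        cadd d (ev4 d hd4)] with e h1 h2 h3 h4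
      have := E1 (x + e) (d + e) h1 h2 h3 h4
      rw [show x + e - (d + e) = x - d by ring] at this
      exact this ht1
    have h := l.unique (r.congr_of_eventuallyEq heq)
    simp only [Pi.sub_apply, Pi.add_apply, add_zero] at h
    linear_combination h
  -- relation for z2
  have D2s : ∀ z, deriv T2 z = deriv T1 (z + 1/2) := by
    intro z; rw [T2eq, deriv_comp_add_const]
  have D3s : ∀ z, deriv T3 z = deriv T4 (z + 1/2) := by
    intro z; rw [T3eq, deriv_comp_add_const]
  have R : ∀ z, T1 z ≠ 0 → T4 z ≠ 0 → T2 z ≠ 0 →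
      2 * (z2 z * f z) = deriv f z + Z z * f z - (a / c) ^ 2 := by
    intro z p q s
    have V2c : ∀ w, V2 w * a * c = 2 * a * (T2 w * T3 w) := by
      intro w
      have h1 := hc (w + 1/2)
      rw [ev0, e2, e3] at h1
      linear_combination a * h1
    have fT : ∀ w, T1 w ≠ 0 → T4 w ≠ 0 → f w * (T1 w * T4 w) * c = a * (T2 w * T3 w) := by
      intro w p q
      have h1 := hfV w p q
      have h2 := hc w
      have h3 := V2c w
      linear_combination c * h1 / 2 - f w * c * h2 / 2 + h3 / 2
    have l := ((df z p q).differentiableAt.hasDerivAt.mul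
      ((d1 z).hasDerivAt.mul (d4 z).hasDerivAt)).mul_const c
    have r := ((d2 z).hasDerivAt.mul (d3 z).hasDerivAt).const_mul a
    have heq : (fun w => f w * (T1 w * T4 w) * c) =ᶠ[nhds z] (fun w => a * (T2 w * T3 w)) := by
      filter_upwards [ev1 z p, ev4 z q] with w h1 h2
      exact fT w h1 h2
    have h := l.unique (r.congr_of_eventuallyEq heq)
    simp only [Pi.mul_apply] at h
    have hw := hW (z + 1/2)
    rw [ev, ← D2s, ← D3s, e2, e3] at hw
    have hcz := hc z
    have hft := fT z p q
    have z14 := hZ14 z p q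
    have k : T1 z * T4 z * c ^ 2 ≠ 0 := mul_ne_zero (mul_ne_zero p q) (pow_ne_zero _ hc0)
    apply mul_left_cancel₀ k
    have g1 : deriv T1 z = (deriv T1 z / T1 z) * T1 z := by field_simp
    have g4 : deriv T4 z = (deriv T4 z / T4 z) * T4 z := by field_simp
    have g2 : deriv T2 z = z2 z * T2 z := by rw [hz2]; field_simp
    have g5 : c ^ 2 * (a / c) ^ 2 = a ^ 2 := by field_simp
    rw [z14]
    generalize deriv T1 z / T1 z = p1 at *
    generalize deriv T4 z / T4 z = p4 at *
    rw [g1, g4, g2] at h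
    rw [g2] at hw
    linear_combination (-c) * h + 2 * z2 z * c * hft - a * c * hw / 2
      + T1 z * T4 z * g5 - a ^ 2 * hcz / 2
  have ev2 : ∀ᶠ w in nhds x, T2 w ≠ 0 := (d2 x).continuousAt.eventually_ne hx2
  have dz2 : DifferentiableAt ℂ z2 x := by
    rw [z2eq]; exact (dd2 x).div (d2 x) hx2
  have R' : 2 * (deriv z2 x * f x + z2 x * deriv f x)
      = deriv (deriv f) x + (deriv Z x * f x + Z x * deriv f x) := by
    have l := (dz2.hasDerivAt.mul fx.differentiableAt.hasDerivAt).const_mul 2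
    have r := (fx.deriv.differentiableAt.hasDerivAt.add
      ((dZ x hx1 hx4).hasDerivAt.mul fx.differentiableAt.hasDerivAt)).sub_const ((a / c) ^ 2)
    have heq : (fun w => 2 * (z2 w * f w)) =ᶠ[nhds x]
        (fun w => deriv f w + Z w * f w - (a / c) ^ 2) := by
      filter_upwards [ev1 x hx1, ev4 x hx4, ev2] with e h1 h2 h3
      exact R e h1 h2 h3
    exact l.unique (r.congr_of_eventuallyEq heq)
  have ft := hf (x - d)
  have Zt := hZ14 (x - d) ht1 ht4
  rw [ft, Zt]
  linear_combination R' - F4 / 2 + F1 / 2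

theorem theta2_eq_jacobi (u τ : ℂ) : theta2 u τ =
    Complex.exp ((Real.pi : ℂ) * I * τ / 4 + Real.pi * I * u) * jacobiTheta₂ (u + τ / 2) τ := by
  rw [theta2, jacobiTheta₂, ← tsum_mul_left]
  refine tsum_congr fun k => ?_
  rw [jacobiTheta₂_term, ← Complex.exp_add]
  congr 1; ring

theorem theta4_eq_jacobi (u τ : ℂ) : theta4 u τ = jacobiTheta₂ (u + 1/2) τ := by
  rw [theta4, jacobiTheta₂]
  refine tsum_congr fun k => ?_
  rw [jacobiTheta₂_term]
  congr 1; ring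

theorem theta1_eq_theta2 (u τ : ℂ) : theta1 u τ = -theta2 (u + 1/2) τ := rfl

theorem theta4_add_one (u τ : ℂ) : theta4 (u + 1) τ = theta4 u τ := by
  rw [theta4_eq_jacobi, theta4_eq_jacobi, ← jacobiTheta₂_add_left (u + 1/2)]
  congr 1; ring

theorem theta2_add_one (u τ : ℂ) : theta2 (u + 1) τ = -theta2 u τ := by
  rw [theta2_eq_jacobi, theta2_eq_jacobi, show u + 1 + τ / 2 = (u + τ / 2) + 1 by ring,
    jacobiTheta₂_add_left, show (Real.pi : ℂ) * I * τ / 4 + Real.pi * I * (u + 1)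
      = ((Real.pi : ℂ) * I * τ / 4 + Real.pi * I * u) + Real.pi * I by ring,
    Complex.exp_add, Complex.exp_pi_mul_I]
  ring

theorem theta1_add_half (u τ : ℂ) : theta1 (u + 1/2) τ = theta2 u τ := by
  rw [theta1_eq_theta2, show u + 1/2 + 1/2 = u + 1 by ring, theta2_add_one, neg_neg]

theorem theta2_add_half (u τ : ℂ) : theta2 (u + 1/2) τ = -theta1 u τ := by
  rw [theta1_eq_theta2, neg_neg]

theorem theta1_add_one (u τ : ℂ) : theta1 (u + 1) τ = -theta1 u τ := by
  rw [theta1_eq_theta2, theta1_eq_theta2, show u + 1 + 1/2 = u + 1/2 + 1 by ring, theta2_add_one]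

theorem theta2_neg (u τ : ℂ) : theta2 (-u) τ = theta2 u τ := by
  rw [theta2, theta2, ← (Equiv.subLeft (-1 : ℤ)).tsum_eq]
  refine tsum_congr fun k => ?_
  simp only [Equiv.subLeft_apply]
  congr 1; push_cast; ring

theorem theta1_neg (u τ : ℂ) : theta1 (-u) τ = -theta1 u τ := by
  rw [theta1_eq_theta2, ← theta2_neg, show -(-u + 1/2) = u - 1/2 by ring, ← theta1_add_half]
  congr 2; ring

theorem differentiable_theta2 {τ : ℂ} (hτ : 0 < τ.im) : Differentiable ℂ (fun v => theta2 v τ) := by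
  intro u
  simp only [theta2_eq_jacobi]
  have h := differentiableAt_jacobiTheta₂_fst (u + τ / 2) hτ
  have h2 : DifferentiableAt ℂ (fun v => jacobiTheta₂ (v + τ / 2) τ) u :=
    DifferentiableAt.comp (g := fun z => jacobiTheta₂ z τ) u h (by fun_prop)
  exact DifferentiableAt.mul (by fun_prop) h2

theorem differentiable_theta1 {τ : ℂ} (hτ : 0 < τ.im) : Differentiable ℂ (fun v => theta1 v τ) := by
  intro u
  simp only [theta1_eq_theta2]
  exact (DifferentiableAt.comp (g := fun z => theta2 z τ) u
    (differentiable_theta2 hτ _) (by fun_prop)).neg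

theorem differentiable_theta4 {τ : ℂ} (hτ : 0 < τ.im) : Differentiable ℂ (fun v => theta4 v τ) := by
  intro u
  simp only [theta4_eq_jacobi]
  exact DifferentiableAt.comp (g := fun z => jacobiTheta₂ z τ) u
    (differentiableAt_jacobiTheta₂_fst _ hτ) (by fun_prop)

theorem summable_theta2 {τ : ℂ} (hτ : 0 < τ.im) (u : ℂ) :
    Summable fun k : ℤ => Complex.exp ((Real.pi : ℂ) * Complex.I * τ * ((k : ℂ) + 1/2)^2
      + 2 * (Real.pi : ℂ) * Complex.I * u * ((k : ℂ) + 1/2)) := by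
  refine (((summable_jacobiTheta₂_term_iff (u + τ / 2) τ).2 hτ).mul_left
    (Complex.exp ((Real.pi : ℂ) * I * τ / 4 + Real.pi * I * u))).congr fun k => ?_
  rw [jacobiTheta₂_term, ← Complex.exp_add]
  congr 1; ring

theorem summable_theta4 {τ : ℂ} (hτ : 0 < τ.im) (u : ℂ) :
    Summable fun k : ℤ => Complex.exp ((Real.pi : ℂ) * Complex.I * τ * (k : ℂ)^2
      + 2 * (Real.pi : ℂ) * Complex.I * u * (k : ℂ)) := by
  refine ((summable_jacobiTheta₂_term_iff u τ).2 hτ).congr fun k => ?_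
  rw [jacobiTheta₂_term]
  congr 1; ring

/-- Parity splitting of the integer lattice. -/
def latticeEquiv : (ℤ × ℤ) ⊕ (ℤ × ℤ) ≃ ℤ × ℤ where
  toFun := Sum.elim (fun p => (p.1 + p.2, p.1 - p.2)) (fun p => (p.1 + p.2, p.1 - p.2 - 1))
  invFun q := if (q.1 - q.2) % 2 = 0 then Sum.inl ((q.1 + q.2) / 2, (q.1 - q.2) / 2)
    else Sum.inr ((q.1 + q.2 + 1) / 2, (q.1 - q.2) / 2)
  left_inv := by
    rintro (⟨l, k⟩ | ⟨l, k⟩)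
    · have h : (l + k - (l - k)) % 2 = 0 := by lia
      simp only [Sum.elim_inl, h, if_true]
      congr 2 <;> lia
    · have h : ¬ (l + k - (l - k - 1)) % 2 = 0 := by lia
      simp only [Sum.elim_inr, h, if_false]
      congr 2 <;> lia
  right_inv := by
    rintro ⟨m, n⟩
    by_cases h : (m - n) % 2 = 0
    · simp only [h, if_true, Sum.elim_inl]
      congr 1 <;> lia
    · simp only [h, if_false, Sum.elim_inr]
      congr 1 <;> lia

theorem hasSum_prod {f g : ℤ → ℂ} (hf : Summable f) (hg : Summable g) :
    HasSum (fun p : ℤ × ℤ => f p.1 * g p.2) ((∑' k, f k) * ∑' k, g k) := by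
  rw [tsum_mul_tsum_of_summable_norm hf.norm hg.norm]
  exact (summable_mul_of_summable_norm hf.norm hg.norm).hasSum

theorem theta_product {τ : ℂ} (hτ : 0 < τ.im) (x d : ℂ) :
    theta1 x (τ / 2) * theta2 d (τ / 2)
      = theta1 (x + d) τ * theta4 (x - d) τ + theta4 (x + d) τ * theta1 (x - d) τ := by
  have hτ2 : 0 < (τ / 2).im := by
    have : (τ / 2).im = τ.im / 2 := by simp
    rw [this]; linarith
  have L := hasSum_prod (summable_theta2 hτ2 (x + 1/2)) (summable_theta2 hτ2 d)
  have P := hasSum_prod (summable_theta2 hτ (x + d + 1/2)) (summable_theta4 hτ (x - d + 1/2))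
  have Q := hasSum_prod (summable_theta4 hτ (x + d + 1/2)) (summable_theta2 hτ (x - d + 1/2))
  rw [← latticeEquiv.hasSum_iff] at L
  have L' := L.unique (HasSum.sum (P.congr_fun ?_) (Q.congr_fun ?_))
  · rw [theta1, theta1, theta1, theta2, theta4, theta4]
    linear_combination -L'
  · rintro ⟨l, k⟩
    simp only [Function.comp_apply, latticeEquiv, Equiv.coe_fn_mk, Sum.elim_inl]
    rw [← Complex.exp_add, ← Complex.exp_add]
    congr 1; push_cast; ring
  · rintro ⟨l, k⟩
    simp only [Function.comp_apply, latticeEquiv, Equiv.coe_fn_mk, Sum.elim_inr]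
    rw [← Complex.exp_add, ← Complex.exp_add]
    congr 1; push_cast; ring

theorem theta_product' {τ : ℂ} (hτ : 0 < τ.im) (x d : ℂ) :
    theta2 x (τ / 2) * theta1 d (τ / 2)
      = theta1 (x + d) τ * theta4 (x - d) τ - theta4 (x + d) τ * theta1 (x - d) τ := by
  have h := theta_product hτ (x + 1/2) (d - 1/2)
  rw [theta1_add_half, show x + 1/2 + (d - 1/2) = x + d by ring,
    show x + 1/2 - (d - 1/2) = (x - d) + 1 by ring, theta4_add_one, theta1_add_one,
    ← theta1_add_half (d - 1/2), sub_add_cancel] at h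
  rw [h]; ring

theorem zeta1_neg (u τ : ℂ) : zeta1 (-u) τ = -zeta1 u τ := by
  have h : deriv (fun v => theta1 v τ) (-u) = deriv (fun v => theta1 v τ) u := by
    have h1 := deriv_comp_neg (fun v => theta1 v τ) u
    simp only [theta1_neg, deriv.fun_neg] at h1
    linear_combination h1
  rw [zeta1, zeta1, h, theta1_neg, div_neg]

theorem key_lemma {τ : ℂ} (hτ : 0 < τ.im) (x d : ℂ)
    (hx1 : theta1 x τ ≠ 0) (hx4 : theta4 x τ ≠ 0) (hx2 : theta2 x τ ≠ 0)
    (hd1 : theta1 d τ ≠ 0) (hd4 : theta4 d τ ≠ 0)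
    (ht1 : theta1 (x - d) τ ≠ 0) (ht4 : theta4 (x - d) τ ≠ 0) :
    Spp x τ * (-zeta1 (x - d) (τ / 2) - zeta1 d (τ / 2) + 2 * zeta2 x τ) - 2 * Sp x τ * wp2 x τ
      + Spp d τ * Sp (x - d) τ = Sp x τ * deriv (fun v => zeta1 v (τ / 2)) d := by
  have hτ2 : 0 < (τ / 2).im := by
    have : (τ / 2).im = τ.im / 2 := by simp
    rw [this]; linarith
  have h := core_identity (fun v => theta1 v τ) (fun v => theta2 v τ)
    (fun v => theta4 (v + 1/2) τ) (fun v => theta4 v τ) (fun v => theta1 v (τ / 2))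
    (fun v => theta2 v (τ / 2)) (differentiable_theta1 hτ) (differentiable_theta4 hτ)
    (differentiable_theta1 hτ2) (fun z => theta1_add_half z τ) (fun _ => rfl)
    (fun z => theta1_add_half z _) (fun z => theta2_add_half z _)
    (fun x d => theta_product hτ x d) (fun x d => theta_product' hτ x d)
    (fun v => Sp v τ) (fun v => zeta1 v (τ / 2)) (fun v => zeta2 v τ)
    (fun _ => rfl) (fun _ => rfl) (fun _ => rfl) x d hx1 hx4 hx2 hd1 hd4 ht1 ht4
  rw [wp2, Spp, Spp]
  linear_combination h

/-- Key identity of Appendix B: the identity behind the z-independence of the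
ratio ∂_{λ_j}Q/(Q_j − Q_i), i.e. of the coefficients Γ_{ij}. -/
theorem appendixB_key_identity (τ u x y : ℂ) (hτ : 0 < τ.im)
    (h1 : theta1 (u + x) τ ≠ 0) (h2 : theta4 (u + x) τ ≠ 0)
    (h3 : theta1 x τ ≠ 0) (h4 : theta4 x τ ≠ 0)
    (h5 : theta1 y τ ≠ 0) (h6 : theta4 y τ ≠ 0)
    (h7 : theta1 (u + y) τ ≠ 0) (h8 : theta4 (u + y) τ ≠ 0)
    (h9 : theta1 (x - y) τ ≠ 0) (h10 : theta4 (x - y) τ ≠ 0)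
    (h11 : theta1 (u + y) (τ / 2) ≠ 0) (h12 : theta1 (y - x) (τ / 2) ≠ 0)
    (h13 : theta1 y (τ / 2) ≠ 0)
    (h14 : theta2 (u + x) τ ≠ 0) (h15 : theta2 x τ ≠ 0) :
    Spp (u + x) τ * Sp x τ
        * (-zeta1 (u + y) (τ / 2) + zeta1 (y - x) (τ / 2) + 2 * zeta2 (u + x) τ)
      - Spp x τ * Sp (u + x) τ
        * (-zeta1 y (τ / 2) + zeta1 (y - x) (τ / 2) + 2 * zeta2 x τ)
      + 2 * Sp (u + x) τ * Sp x τ * (wp2 x τ - wp2 (u + x) τ)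
      = Spp (x - y) τ * (Sp y τ * Sp (u + x) τ - Sp x τ * Sp (u + y) τ) := by
  have A := key_lemma hτ (u + x) (x - y) h1 h2 h14 h9 h10
    (by rwa [show u + x - (x - y) = u + y by ring])
    (by rwa [show u + x - (x - y) = u + y by ring])
  have B := key_lemma hτ x (x - y) h3 h4 h15 h9 h10
    (by rwa [show x - (x - y) = y by ring]) (by rwa [show x - (x - y) = y by ring])
  rw [show u + x - (x - y) = u + y by ring] at A
  rw [show x - (x - y) = y by ring] at B
  have N := zeta1_neg (x - y) (τ / 2)
  rw [neg_sub] at N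
  rw [N]
  linear_combination Sp x τ * A - Sp (u + x) τ * B
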